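/- arXiv:0907.5283 — 8 statements merged into one kernel-verified Lean document; each statement's English description precedes it below -/
import Mathlib

section
/- For every natural number n ≥ 2, the polynomial X^n − X + 1, regarded as a polynomial over ℚ, is separable (equivalently, it is coprime to its derivative n·X^(n−1) − 1, so it has n distinct complex roots). -/
open Polynomial

/-- For every `n ≥ 2`, the polynomial `X^n - X + 1` over `ℚ` is separable. -/
theorem stmt1 (n : ℕ) (hn : 2 ≤ n) :
    (X ^ n - X + 1 : ℚ[X]).Separable := by
  obtain ⟨m, rfl⟩ : ∃ m, n = m + 1 := ⟨n - 1, by omega⟩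
  have hm : (0 : ℚ) < m := by
    have : 0 < m := by omega
    exact_mod_cast this
  have hroot : ¬ (X - C (((m : ℚ) + 1) / m)) ∣ (X ^ (m + 1) - X + 1 : ℚ[X]) := by
    rw [dvd_iff_isRoot]
    simp only [IsRoot.def, eval_add, eval_sub, eval_pow, eval_X, eval_one]
    have h1 : (1 : ℚ) ≤ ((m : ℚ) + 1) / m := by
      rw [le_div_iff₀ hm]; linarith
    have h2 : ((m : ℚ) + 1) / m ≤ (((m : ℚ) + 1) / m) ^ (m + 1) :=
      le_self_pow₀ h1 (by omega)
    intro h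
    linarith
  have hco := ((irreducible_X_sub_C (((m : ℚ) + 1) / m)).coprime_iff_not_dvd.2 hroot).symm
  have hunit : IsUnit (C (-(m : ℚ))) := isUnit_C.2 (neg_ne_zero.2 hm.ne').isUnit
  have hco2 := (isCoprime_mul_unit_left_right hunit _ _).2 hco
  have hC : C (m : ℚ) * C (((m : ℚ) + 1) / m) = (m : ℚ[X]) + 1 := by
    rw [← C_mul, mul_div_cancel₀ _ hm.ne']
    simp
  have key : C (-(m : ℚ)) * (X - C (((m : ℚ) + 1) / m))
      = derivative (X ^ (m + 1) - X + 1 : ℚ[X]) * (-X)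
        + (X ^ (m + 1) - X + 1 : ℚ[X]) * ((m : ℚ[X]) + 1) := by
    have : C (-(m : ℚ)) * (X - C (((m : ℚ) + 1) / m))
        = -(m : ℚ[X]) * X + ((m : ℚ[X]) + 1) := by
      rw [← hC]; simp only [C_neg, map_natCast]; ring
    rw [this]
    simp only [derivative_add, derivative_sub, derivative_X_pow, derivative_X, derivative_one,
      Nat.add_sub_cancel, map_natCast, Nat.cast_add, Nat.cast_one]
    simp only [map_add, map_natCast, map_one]
    ring
  rw [key] at hco2
  exact (hco2.of_add_mul_left_right).of_mul_right_left
end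

section
/- Let n ≥ 2 be an even natural number and let F be an n×n real matrix whose characteristic polynomial equals X^n − X + 1. Then every n×n real matrix G that commutes with F (i.e. F·G = G·F) satisfies det G ≥ 0. -/
open Polynomial

lemma aux_nonneg (r : ℝ[X]) (hr : r.Monic) (h : ∀ x, ¬ r.IsRoot x) (x : ℝ) : 0 < r.eval x := by
  by_contra hx
  push Not at hx
  rcases Nat.eq_zero_or_pos r.natDegree with h0 | h0
  · have := hr.natDegree_eq_zero.mp h0
    subst this
    norm_num at hx
  · have ht := r.tendsto_atTop_of_leadingCoeff_nonneg (natDegree_pos_iff_degree_pos.1 h0)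
      (by rw [hr.leadingCoeff]; norm_num)
    obtain ⟨y, hy, hxy⟩ := ((ht.eventually_ge_atTop 0).and (Filter.eventually_ge_atTop x)).exists
    obtain ⟨z, -, hz⟩ := intermediate_value_Icc hxy (r.continuous.continuousOn) ⟨hx, hy⟩
    exact h z hz

lemma aux_odd (p : ℝ[X]) (hp : p.Monic) (ho : Odd p.natDegree) : ∃ x, p.IsRoot x := by
  by_contra hno
  push Not at hno
  have h1 := aux_nonneg p hp hno 0
  have h2 := aux_nonneg (-(p.comp (-X))) (by
    rw [Monic, leadingCoeff_neg, leadingCoeff_comp (by simp), hp.leadingCoeff]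
    simp [ho.neg_one_pow]) (by
    intro x hx
    exact hno (-x) (by simpa [IsRoot] using hx)) 0
  simp at h2
  linarith

lemma aux_mult (p : ℝ[X]) (hp : p.Monic) (he : ∀ a, Even (p.rootMultiplicity a)) (x : ℝ) :
    0 ≤ p.eval x := by
  obtain ⟨q, hq, -, hr⟩ := exists_prod_multiset_X_sub_C_mul p
  have hm : (p.roots.map fun a => X - C a).prod.Monic :=
    monic_multiset_prod_of_monic _ _ fun a _ => monic_X_sub_C a
  have hqm : q.Monic := hm.of_mul_monic_left (by rw [hq]; exact hp)
  have hq0 := aux_nonneg q hqm (fun y hy => by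
    have : y ∈ q.roots := (mem_roots hqm.ne_zero).2 hy
    simp [hr] at this) x
  rw [← hq, eval_mul]
  refine mul_nonneg ?_ hq0.le
  rw [Finset.prod_multiset_map_count, eval_prod]
  refine Finset.prod_nonneg fun a _ => ?_
  rw [eval_pow, count_roots]
  exact (he a).pow_nonneg _

theorem aux_eval (n : ℕ) (hn : 2 ≤ n) (hne : Even n) (x : ℝ) : x ^ n - x + 1 ≠ 0 := by
  have h0 := hne.pow_nonneg x
  rcases le_or_gt x 1 with h | h
  · intro hx
    have : x = 1 := by linarith
    subst this
    simp at hx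
  · have := le_self_pow₀ h.le (show n ≠ 0 by omega)
    linarith

/-- If `n ≥ 2` is even and `F` is a real `n × n` matrix with characteristic polynomial
`X^n - X + 1`, then every real matrix `G` commuting with `F` has nonnegative determinant. -/
theorem stmt2 (n : ℕ) (hn : 2 ≤ n) (hne : Even n)
    (F : Matrix (Fin n) (Fin n) ℝ) (hF : F.charpoly = X ^ n - X + 1)
    (G : Matrix (Fin n) (Fin n) ℝ) (hFG : F * G = G * F) :
    0 ≤ G.det := by
  rw [Matrix.det_eq_sign_charpoly_coeff, Fintype.card_fin, hne.neg_one_pow, one_mul,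
    coeff_zero_eq_eval_zero]
  refine aux_mult _ G.charpoly_monic (fun a => ?_) 0
  by_contra hodd
  rw [Nat.not_even_iff_odd] at hodd
  have hc : Commute (Matrix.toLin' G) (Matrix.toLin' F) := by
    change _ * _ = _ * _
    rw [Module.End.mul_eq_comp, Module.End.mul_eq_comp, ← Matrix.toLin'_mul, ← Matrix.toLin'_mul,
      hFG]
  have hmt := Module.End.mapsTo_maxGenEigenspace_of_comm hc a
  rw [← Matrix.charpoly_toLin', ← LinearMap.finrank_maxGenEigenspace_eq,
    ← LinearMap.charpoly_natDegree ((Matrix.toLin' F).restrict hmt)] at hodd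
  obtain ⟨x, hx⟩ := aux_odd _ (LinearMap.charpoly_monic _) hodd
  rw [← Module.End.hasEigenvalue_iff_isRoot_charpoly] at hx
  obtain ⟨v, hv⟩ := hx.exists_hasEigenvector
  have hv1 : Matrix.toLin' F (v : Fin n → ℝ) = x • (v : Fin n → ℝ) :=
    congrArg Subtype.val hv.apply_eq_smul
  have hv2 : Module.End.HasEigenvalue (Matrix.toLin' F) x :=
    Module.End.hasEigenvalue_of_hasEigenvector (x := (v : Fin n → ℝ))
      ⟨Module.End.mem_eigenspace_iff.2 hv1, fun h => hv.2 (Subtype.ext h)⟩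
  rw [Module.End.hasEigenvalue_iff_isRoot_charpoly, Matrix.charpoly_toLin', hF] at hv2
  exact aux_eval n hn hne x (by simpa [IsRoot] using hv2)
end

section
/- Let n ≥ 2 be an even natural number and let F be an n×n integer matrix whose characteristic polynomial equals X^n − X + 1. Then there is no n×n integer matrix G with det G = −1 such that F·G = G·F. -/
open Polynomial

lemma aux_odd_root (p : ℝ[X]) (hm : p.Monic) (hd : Odd p.natDegree) : ∃ x, p.IsRoot x := by
  by_contra! h
  have h1 := zero_lt_eval_of_roots_lt_of_leadingCoeff_nonneg (P := p) (x := 0)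
    (fun y hy => absurd hy (h y)) (by rw [hm.leadingCoeff]; exact zero_le_one)
  have h2 := zero_lt_negOnePow_mul_eval_of_lt_roots_of_leadingCoeff_nonneg (P := p) (x := 0)
    (fun y hy => absurd hy (h y)) (by rw [hm.leadingCoeff]; exact zero_le_one)
  rw [Int.negOnePow_odd _ (by exact_mod_cast hd)] at h2
  simp at h2
  linarith

lemma aux_nonneg_s3 (p : ℝ[X]) (hm : p.Monic) (h : ∀ x, Even (p.rootMultiplicity x)) (x : ℝ) :
    0 ≤ p.eval x := by
  obtain ⟨q, hq, -, hr⟩ := p.exists_prod_multiset_X_sub_C_mul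
  have hqm : q.Monic := by
    apply (monic_multisetProd_X_sub_C p.roots).of_mul_monic_left
    rw [hq]; exact hm
  have h1 := zero_lt_eval_of_roots_lt_of_leadingCoeff_nonneg (P := q) (x := x)
    (fun y hy => by
      have := (mem_roots hqm.ne_zero).2 hy
      rw [hr] at this
      simp at this) (by rw [hqm.leadingCoeff]; exact zero_le_one)
  rw [← hq, eval_mul]
  refine mul_nonneg ?_ h1.le
  rw [Finset.prod_multiset_map_count, eval_prod]
  refine Finset.prod_nonneg fun a _ => ?_
  rw [eval_pow, count_roots]
  exact (h a).pow_nonneg _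

lemma aux_comm {V : Type*} [AddCommGroup V] [Module ℝ V] [FiniteDimensional ℝ V]
    (f g : Module.End ℝ V) (hc : Commute g f) (hf : ∀ x, ¬ f.charpoly.IsRoot x) (x : ℝ) :
    Even (g.charpoly.rootMultiplicity x) := by
  by_contra hodd
  rw [Nat.not_even_iff_odd, ← LinearMap.finrank_maxGenEigenspace_eq] at hodd
  have hmaps := Module.End.mapsTo_maxGenEigenspace_of_comm hc x
  obtain ⟨y, hy⟩ := aux_odd_root (LinearMap.charpoly (f.restrict hmaps))
    (LinearMap.charpoly_monic _) (by rwa [LinearMap.charpoly_natDegree])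
  rw [← Module.End.hasEigenvalue_iff_isRoot_charpoly] at hy
  obtain ⟨v, hv⟩ := hy.exists_hasEigenvector
  apply hf y
  rw [← Module.End.hasEigenvalue_iff_isRoot_charpoly]
  apply Module.End.hasEigenvalue_of_hasEigenvector (x := (v : V))
  refine ⟨?_, by simpa using hv.2⟩
  rw [Module.End.mem_eigenspace_iff]
  exact congrArg Subtype.val hv.apply_eq_smul

/-- If `n ≥ 2` is even and `F` is an integer `n × n` matrix with characteristic polynomial
`X^n - X + 1`, then no integer matrix `G` with `det G = -1` commutes with `F`. -/
theorem stmt3 (n : ℕ) (hn : 2 ≤ n) (hne : Even n)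
    (F : Matrix (Fin n) (Fin n) ℤ) (hF : F.charpoly = X ^ n - X + 1) :
    ¬ ∃ G : Matrix (Fin n) (Fin n) ℤ, G.det = -1 ∧ F * G = G * F := by
  rintro ⟨G, hG, hFG⟩
  set φ := Int.castRingHom ℝ
  have hF' : (F.map φ).charpoly = X ^ n - X + 1 := by
    rw [Matrix.charpoly_map, hF]; simp
  have hG' : (G.map φ).det = -1 := by
    have := φ.map_det G
    rw [hG] at this
    simpa using this.symm
  have hc : Commute (Matrix.toLin' (G.map φ)) (Matrix.toLin' (F.map φ)) := by
    change _ * _ = _ * _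
    rw [Module.End.mul_eq_comp, Module.End.mul_eq_comp, ← Matrix.toLin'_mul, ← Matrix.toLin'_mul,
      ← Matrix.map_mul, ← Matrix.map_mul, hFG]
  have hroot : ∀ x, ¬ (Matrix.toLin' (F.map φ)).charpoly.IsRoot x := by
    intro x hx
    rw [Matrix.charpoly_toLin', hF'] at hx
    simp at hx
    have h0 : 0 ≤ x ^ n := hne.pow_nonneg x
    have h1 : 1 ≤ x := by linarith
    have h2 : x ^ 1 ≤ x ^ n := pow_le_pow_right₀ h1 (by omega)
    linarith
  have key := aux_nonneg_s3 _ (LinearMap.charpoly_monic _) (aux_comm _ _ hc hroot) 0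
  rw [Matrix.charpoly_toLin', ← coeff_zero_eq_eval_zero] at key
  rw [Matrix.det_eq_sign_charpoly_coeff] at hG'
  simp [hne.neg_one_pow] at hG'
  linarith
end

section
/- Let F be the 2×2 integer matrix with rows (0, −1) and (1, 1) (whose characteristic polynomial is X² − X + 1), and let F' be its inverse over ℤ, the matrix with rows (1, 1) and (−1, 0). Then every 2×2 integer matrix G satisfying G·F = F'·G has det G ≤ 0. In particular, there is no such G with det G = 1. -/
/-- Let `F = !![0, -1; 1, 1]` (characteristic polynomial `X² - X + 1`) and let
`F' = !![1, 1; -1, 0]` be its inverse over `ℤ`. Then every integer matrix `G` with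
`G * F = F' * G` has `det G ≤ 0`; in particular, there is no such `G` with `det G = 1`. -/
theorem stmt5 (G : Matrix (Fin 2) (Fin 2) ℤ)
    (h : G * !![0, -1; 1, 1] = !![1, 1; -1, 0] * G) :
    G.det ≤ 0 := by
  have h00 := congrFun (congrFun h 0) 0
  have h10 := congrFun (congrFun h 1) 0
  simp [Matrix.mul_apply, Fin.sum_univ_two] at h00 h10
  rw [Matrix.det_fin_two, h00, h10]
  nlinarith [sq_nonneg (G 0 0), sq_nonneg (G 1 0), sq_nonneg (G 0 0 + G 1 0)]
end

section
/- Let n > 2 be an even natural number and let F be an n×n matrix over ℚ whose characteristic polynomial equals X^n − X + 1 (so F is invertible). Then there is no invertible n×n matrix G over ℚ such that G·F = F⁻¹·G. -/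
open Polynomial

/-- If `n > 2` is even and `F` is an `n × n` matrix over `ℚ` with characteristic polynomial
`X^n - X + 1`, then no invertible matrix `G` over `ℚ` satisfies `G * F = F⁻¹ * G`. -/
theorem stmt7 (n : ℕ) (hn : 2 < n) (hne : Even n)
    (F : Matrix (Fin n) (Fin n) ℚ) (hF : F.charpoly = X ^ n - X + 1) :
    ¬ ∃ G : Matrix (Fin n) (Fin n) ℚ, IsUnit G ∧ G * F = F⁻¹ * G := by 
  rintro ⟨G, ⟨U, rfl⟩, h⟩
  have hdet : F.det = 1 := by
    rw [Matrix.det_eq_sign_charpoly_coeff, hF]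
    have h0 : (0 : ℕ) ≠ n := by omega
    simp [hne.neg_one_pow, coeff_X_pow, h0]
  have hu : IsUnit F := by
    rw [Matrix.isUnit_iff_isUnit_det, hdet]
    exact isUnit_one
  have hconj : F⁻¹.charpoly = F.charpoly := by
    rw [← Matrix.charpoly_units_conj U F, h, mul_assoc, ← Matrix.coe_units_inv, Units.mul_inv,
      mul_one]
  haveI : Nonempty (Fin n) := ⟨⟨0, by omega⟩⟩
  have htr : F.trace = 0 := by
    rw [Matrix.trace_eq_neg_charpoly_coeff, hF]
    have h1 : n - 1 ≠ n := by omega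
    have h2 : 1 ≠ n - 1 := by omega
    have h3 : n - 1 ≠ 0 := by omega
    simp [coeff_X_pow, coeff_X, coeff_one, h1, h2, h3]
  have hc : F⁻¹.charpoly.coeff 1 = 0 := by
    rw [Matrix.charpoly_inv F hu, hdet]
    simp [hne.neg_one_pow, htr]
  rw [hconj, hF] at hc
  have h1 : (1 : ℕ) ≠ n := by omega
  simp [coeff_X_pow, coeff_one, h1] at hc
end

section
/- For every even natural number n ≥ 2 there exists an n×n integer matrix F with the following properties: (i) det F = 1; (ii) det(F − I) = 1; (iii) there is no n×n integer matrix G with det G = −1 such that F·G = G·F; (iv) for the (integer) inverse matrix F⁻¹ of F, there is no n×n integer matrix G with det G = 1 such that G·F = F⁻¹·G. -/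
open Polynomial

lemma det_quad_nonneg {n : ℕ} (A : Matrix (Fin n) (Fin n) ℝ) (d : ℝ) :
    0 ≤ (A ^ 2 + (d ^ 2) • (1 : Matrix (Fin n) (Fin n) ℝ)).det := by
  set f : ℝ →+* ℂ := algebraMap ℝ ℂ
  let B : Matrix (Fin n) (Fin n) ℂ := A.map f
  let P : Matrix (Fin n) (Fin n) ℂ := B + (Complex.I * d) • 1
  have hconj : (P.map (starRingEnd ℂ)) = B - (Complex.I * d) • 1 := by
    ext i j
    by_cases h : i = j <;> simp [P, B, f, Matrix.one_apply, h, sub_eq_add_neg]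
  have hprod : P * (P.map (starRingEnd ℂ)) =
      (A ^ 2 + (d ^ 2) • (1 : Matrix (Fin n) (Fin n) ℝ)).map f := by
    rw [hconj]
    have h1 : (A ^ 2 + (d ^ 2) • (1 : Matrix (Fin n) (Fin n) ℝ)).map f
        = B ^ 2 + ((d : ℂ) ^ 2) • 1 := by
      have : (A ^ 2).map f = B ^ 2 := by simp [B, pow_two, Matrix.map_mul]
      rw [← this]
      ext i j
      by_cases h : i = j <;> simp [f, Matrix.one_apply, h]
    rw [h1]
    simp only [P]
    rw [add_mul, mul_sub, mul_sub]
    simp only [Matrix.mul_smul, Matrix.smul_mul, mul_one, one_mul, smul_smul, pow_two B]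
    have : (Complex.I * d * (Complex.I * d)) = -(d:ℂ)^2 := by
      linear_combination (d:ℂ)^2 * Complex.I_mul_I
    rw [this, neg_smul]
    abel
  have h := congrArg Matrix.det hprod
  rw [Matrix.det_mul] at h
  have h2 : (P.map (starRingEnd ℂ)).det = (starRingEnd ℂ) P.det :=
    ((starRingEnd ℂ).map_det P).symm
  have h3 : ((A ^ 2 + (d ^ 2) • (1 : Matrix (Fin n) (Fin n) ℝ)).map f).det =
      f (A ^ 2 + (d ^ 2) • (1 : Matrix (Fin n) (Fin n) ℝ)).det := (f.map_det _).symm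
  rw [h2, h3, Complex.mul_conj] at h
  have h4 : Complex.normSq P.det = (A ^ 2 + (d ^ 2) • (1 : Matrix (Fin n) (Fin n) ℝ)).det := by
    exact Complex.ofReal_injective h
  rw [← h4]
  exact Complex.normSq_nonneg _

lemma det_aeval_nonneg {n : ℕ} (hn : Even n) (A : Matrix (Fin n) (Fin n) ℝ)
    (hA : ∀ a : ℝ, 0 ≤ A.charpoly.eval a) (k : ℕ) :
    ∀ q : ℝ[X], q.natDegree ≤ k → 0 ≤ (aeval A q).det := by
  induction k with
  | zero =>
    intro q hq
    rw [eq_C_of_natDegree_le_zero hq, aeval_C, Algebra.algebraMap_eq_smul_one, Matrix.det_smul]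
    simpa using hn.pow_nonneg _
  | succ k ih =>
    intro q hq
    by_cases hd : q.natDegree ≤ k
    · exact ih q hd
    have hq0 : q ≠ 0 := by rintro rfl; simp at hd
    have hdeg : q.degree ≠ 0 := by
      rw [degree_eq_natDegree hq0]
      have : q.natDegree ≠ 0 := by omega
      exact_mod_cast this
    obtain ⟨z, hz⟩ := IsAlgClosed.exists_aeval_eq_zero ℂ q hdeg
    by_cases him : z.im = 0
    · have hz' : z = algebraMap ℝ ℂ z.re := by
        apply Complex.ext <;> simp [him]
      have hr : q.IsRoot z.re := by
        rw [hz', aeval_algebraMap_apply] at hz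
        have : aeval z.re q = 0 := by simpa using hz
        simpa [IsRoot, coe_aeval_eq_eval] using this
      obtain ⟨r, rfl⟩ := dvd_iff_isRoot.mpr hr
      have hr0 : r ≠ 0 := right_ne_zero_of_mul hq0
      rw [natDegree_mul (X_sub_C_ne_zero _) hr0, natDegree_X_sub_C] at hq
      rw [map_mul, Matrix.det_mul]
      refine mul_nonneg ?_ (ih r (by omega))
      have h1 := hA z.re
      rw [Matrix.eval_charpoly] at h1
      have h2 : aeval A (X - C z.re) = -(Matrix.scalar (Fin n) z.re - A) := by
        simp [Matrix.algebraMap_eq_diagonal, Matrix.scalar_apply, Pi.algebraMap_def]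
      rw [h2, Matrix.det_neg]
      simpa [hn.neg_one_pow] using h1
    · obtain ⟨r, rfl⟩ := q.quadratic_dvd_of_aeval_eq_zero_im_ne_zero hz him
      have hr0 : r ≠ 0 := right_ne_zero_of_mul hq0
      have hqd : (X ^ 2 - C (2 * z.re) * X + C (‖z‖ ^ 2) : ℝ[X]).natDegree = 2 := by
        compute_degree!
      rw [natDegree_mul (left_ne_zero_of_mul hq0) hr0, hqd] at hq
      rw [map_mul, Matrix.det_mul]
      refine mul_nonneg ?_ (ih r (by omega))
      have h0 : (X ^ 2 - C (2 * z.re) * X + C (‖z‖ ^ 2) : ℝ[X]) =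
          (X - C z.re) ^ 2 + C (z.im ^ 2) := by
        rw [← Complex.normSq_eq_norm_sq, Complex.normSq_apply]
        simp only [map_add, map_mul, map_pow, map_ofNat]
        ring
      rw [h0, map_add, map_pow, aeval_C, Algebra.algebraMap_eq_smul_one]
      exact det_quad_nonneg _ _

lemma pos_real {n : ℕ} (hn : Even n) (hn0 : n ≠ 0) (a : ℝ) : 0 ≤ a ^ n - a + 1 := by
  have h0 : 0 ≤ a ^ n := hn.pow_nonneg a
  by_cases h : a ≤ 1
  · linarith
  · have : a ≤ a ^ n ∨ n = 0 := by
      rcases Nat.eq_zero_or_pos n with h | h'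
      · exact Or.inr h
      · exact Or.inl (le_self_pow₀ (by linarith) (by omega))
    rcases this with h1 | h1
    · linarith
    · omega

lemma two_case : ∃ F : Matrix (Fin 2) (Fin 2) ℤ,
      F.det = 1 ∧
      (F - 1).det = 1 ∧
      (¬ ∃ G : Matrix (Fin 2) (Fin 2) ℤ, G.det = -1 ∧ F * G = G * F) ∧
      (¬ ∃ G : Matrix (Fin 2) (Fin 2) ℤ, G.det = 1 ∧ G * F = F⁻¹ * G) := by
  refine ⟨!![0, -1; 1, 1], by simp [Matrix.det_fin_two], by simp [Matrix.det_fin_two], ?_, ?_⟩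
  · rintro ⟨G, h1, h2⟩
    have a := congrFun (congrFun h2 0) 0
    have b := congrFun (congrFun h2 0) 1
    simp [Matrix.mul_apply, Fin.sum_univ_two] at a b
    rw [Matrix.det_fin_two] at h1
    have e : G 1 0 = - G 0 1 := by linarith
    have e' : G 1 1 = G 0 0 - G 0 1 := by linarith
    rw [e, e'] at h1
    nlinarith [sq_nonneg (2 * G 0 0 - G 0 1), sq_nonneg (G 0 1)]
  · rintro ⟨G, h1, h2⟩
    have hi : (!![0, -1; 1, 1] : Matrix (Fin 2) (Fin 2) ℤ)⁻¹ = !![1, 1; -1, 0] := by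
      apply Matrix.inv_eq_right_inv
      ext i j; fin_cases i <;> fin_cases j <;> simp [Matrix.mul_apply, Fin.sum_univ_two]
    rw [hi] at h2
    have a := congrFun (congrFun h2 0) 0
    have b := congrFun (congrFun h2 0) 1
    simp [Matrix.mul_apply, Fin.sum_univ_two] at a b
    rw [Matrix.det_fin_two] at h1
    have e : G 1 1 = - G 0 0 := by linarith
    have e' : G 1 0 = G 0 1 - G 0 0 := by linarith
    rw [e, e'] at h1
    nlinarith [sq_nonneg (2 * G 0 0 - G 0 1), sq_nonneg (G 0 1)]

lemma big_case (n : ℕ) (hn : 2 < n) (hne : Even n) :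
    ∃ F : Matrix (Fin n) (Fin n) ℤ,
      F.det = 1 ∧
      (F - 1).det = 1 ∧
      (¬ ∃ G : Matrix (Fin n) (Fin n) ℤ, G.det = -1 ∧ F * G = G * F) ∧
      (¬ ∃ G : Matrix (Fin n) (Fin n) ℤ, G.det = 1 ∧ G * F = F⁻¹ * G) := by
  obtain ⟨p, hp⟩ : ∃ p : ℤ[X], p = X ^ n - X + 1 := ⟨_, rfl⟩
  have hdeg : p.natDegree = n := by
    rw [hp]
    have : (X ^ n - X + 1 : ℤ[X]) = X ^ n + (-X + 1) := by ring
    rw [this, natDegree_add_eq_left_of_natDegree_lt]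
    · simp
    · rw [natDegree_X_pow]
      exact lt_of_le_of_lt (by compute_degree) (show 1 < n by omega)
  have hmon : p.Monic := by
    have : p = X ^ n + (-X + 1) := by rw [hp]; ring
    rw [this]
    apply monic_X_pow_add
    refine lt_of_le_of_lt (b := ((1 : ℕ) : WithBot ℕ)) (by compute_degree; simp) ?_
    exact_mod_cast (show 1 < n by omega)
  subst hdeg
  let b : Module.Basis (Fin p.natDegree) ℤ (AdjoinRoot p) := (AdjoinRoot.powerBasis' hmon).basis
  set x := AdjoinRoot.root p
  let L := Algebra.leftMulMatrix b
  have hL : Function.Injective L := Algebra.leftMulMatrix_injective b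
  set F := L x with hF
  have hpx : aeval x p = 0 := by rw [AdjoinRoot.aeval_eq, AdjoinRoot.mk_self]
  have hchar : F.charpoly = p := by
    apply eq_of_monic_of_dvd_of_natDegree_le hmon F.charpoly_monic
    · rw [← AdjoinRoot.mk_eq_zero, ← AdjoinRoot.aeval_eq]
      apply hL
      rw [← aeval_algHom_apply, map_zero]
      exact Matrix.aeval_self_charpoly F
    · simp
  have hdetF : F.det = 1 := by
    rw [Matrix.det_eq_sign_charpoly_coeff, hchar]
    simp only [Fintype.card_fin, hne.neg_one_pow, one_mul]
    rw [hp]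
    simp [coeff_zero_eq_eval_zero]
    omega
  refine ⟨F, hdetF, ?_, ?_, ?_⟩
  · have h1 := Matrix.eval_charpoly F 1
    rw [hchar] at h1
    have h2 : F - 1 = -(Matrix.scalar (Fin p.natDegree) 1 - F) := by simp
    rw [h2, Matrix.det_neg, ← h1, Fintype.card_fin, hne.neg_one_pow]
    conv_lhs => rw [hp]
    simp
  · rintro ⟨G, hG1, hG2⟩
    let g := Matrix.toLin b b G
    have hcomm : ∀ y, g (x * y) = x * g y := by
      intro y
      have h := congrArg (Matrix.toLin b b) hG2
      rw [Matrix.toLin_mul b b b, Matrix.toLin_mul b b b] at h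
      have hFx : Matrix.toLin b b F = LinearMap.mulLeft ℤ x := by
        rw [hF]; exact Matrix.toLin_toMatrix b b _
      rw [hFx] at h
      exact (LinearMap.congr_fun h y).symm
    obtain ⟨q, hq⟩ := AdjoinRoot.mk_surjective (g 1)
    have hpoly : ∀ k : ℕ, ∀ y, g (x ^ k * y) = x ^ k * g y := by
      intro k
      induction k with
      | zero => simp
      | succ k ih => intro y; rw [pow_succ, mul_assoc, ih, hcomm, mul_assoc]
    have hall : ∀ y, g y = g 1 * y := by
      intro y
      obtain ⟨r, rfl⟩ := AdjoinRoot.mk_surjective y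
      rw [← AdjoinRoot.aeval_eq]
      induction r using Polynomial.induction_on' with
      | add r s hr hs => rw [map_add, map_add, mul_add, hr, hs]
      | monomial k c =>
        rw [aeval_monomial, ← Algebra.smul_def, map_smul, mul_smul_comm]
        have := hpoly k 1
        rw [mul_one] at this
        rw [show AdjoinRoot.root p = x from rfl, this, mul_comm]
    have hGq : G = aeval F q := by
      rw [hF, aeval_algHom_apply, AdjoinRoot.aeval_eq, hq]
      apply (Matrix.toLin b b).injective
      have h2 : Matrix.toLin b b (L (g 1)) = LinearMap.mulLeft ℤ (g 1) :=
        Matrix.toLin_toMatrix b b _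
      rw [h2]
      ext y
      exact hall y
    have h1 := det_aeval_nonneg hne (F.map (Int.castRingHom ℝ)) (by
      intro a
      rw [Matrix.charpoly_map, hchar]
      have := pos_real hne (by omega) a
      rw [eval_map]
      have h2 : eval₂ (Int.castRingHom ℝ) a p =
          eval₂ (Int.castRingHom ℝ) a (X ^ p.natDegree - X + 1 : ℤ[X]) := congrArg _ hp
      rw [h2]
      simpa using this) _ (q.map (Int.castRingHom ℝ)) le_rfl
    have h2 : aeval (F.map (Int.castRingHom ℝ)) (q.map (Int.castRingHom ℝ)) =
        G.map (Int.castRingHom ℝ) := by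
      rw [hGq, ← RingHom.mapMatrix_apply, ← RingHom.mapMatrix_apply, aeval_def, aeval_def,
        eval₂_map, hom_eval₂]
      congr 1
      exact Subsingleton.elim _ _
    rw [h2] at h1
    have h3 : (G.map (Int.castRingHom ℝ)).det = Int.castRingHom ℝ G.det :=
      ((Int.castRingHom ℝ).map_det G).symm
    rw [h3, hG1] at h1
    norm_num at h1
  · rintro ⟨G, hG1, hG2⟩
    have hu : IsUnit F.det := by rw [hdetF]; exact isUnit_one
    have hpF : F ^ p.natDegree - F + 1 = 0 := by
      have := Matrix.aeval_self_charpoly F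
      rw [hchar] at this
      have h2 : aeval F p = aeval F (X ^ p.natDegree - X + 1 : ℤ[X]) := congrArg _ hp
      rw [h2] at this
      simpa using this
    have hpow : ∀ k : ℕ, F ^ k * G * F ^ k = G := by
      intro k
      induction k with
      | zero => simp
      | succ k ih =>
        have h1 : F * G * F = G := by
          rw [mul_assoc, hG2, ← mul_assoc, Matrix.mul_nonsing_inv _ hu, one_mul]
        calc F ^ (k+1) * G * F ^ (k+1) = F ^ k * (F * G * F) * F ^ k := by
              rw [pow_succ F k]; nth_rewrite 2 [← pow_succ]; rw [pow_succ']; noncomm_ring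
          _ = G := by rw [h1, ih]
    obtain ⟨m, hm⟩ : ∃ m, p.natDegree = m + 1 := ⟨p.natDegree - 1, by omega⟩
    have h1 : (1 - F ^ m + F ^ (m + 1)) * G = 0 := by
      have h2 : F ^ (m + 1) * G * F = F ^ m * G := by
        have h3 := hpow 1
        rw [pow_one] at h3
        calc F ^ (m + 1) * G * F = F ^ m * (F * G * F) := by rw [pow_succ]; noncomm_ring
          _ = _ := by rw [h3]
      have h4 : F ^ (m + 1) * G * (F ^ (m + 1) - F + 1) = 0 := by
        rw [← hm, hpF, mul_zero]
      rw [mul_add, mul_sub, hpow, h2, mul_one] at h4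
      rw [add_mul, sub_mul, one_mul, h4]
    have h5 : 1 - F ^ m + F ^ (m + 1) = 0 := by
      have hGu : IsUnit G.det := by rw [hG1]; exact isUnit_one
      have := congrArg (· * G⁻¹) h1
      simpa [Matrix.mul_nonsing_inv_cancel_right _ _ hGu] using this
    have h6 : F ^ m = F := by
      have hpF' : F ^ (m + 1) - F + 1 = 0 := by rw [← hm]; exact hpF
      have h7 : F ^ m - F = (F ^ (m + 1) - F + 1) - (1 - F ^ m + F ^ (m + 1)) := by abel
      rw [hpF', h5, sub_zero] at h7
      exact sub_eq_zero.mp h7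
    have h8 : x ^ m = x := by
      apply hL
      rw [map_pow]
      exact h6
    have h9 : p ∣ X ^ m - X := by
      rw [← AdjoinRoot.mk_eq_zero, map_sub, map_pow, AdjoinRoot.mk_X]
      exact sub_eq_zero.mpr h8
    have hm2 : 1 < m := by omega
    have h10 : (X ^ m - X : ℤ[X]).natDegree = m := by
      rw [natDegree_sub_eq_left_of_natDegree_lt] <;> simp [hm2]
    have h11 : (X ^ m - X : ℤ[X]) ≠ 0 := by
      intro h
      rw [h, natDegree_zero] at h10
      omega
    have := natDegree_le_of_dvd h9 h11
    omega


/-- For every even `n ≥ 2` there is an integer `n × n` matrix `F` with `det F = 1`,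
`det (F - 1) = 1`, no integer matrix `G` with `det G = -1` commutes with `F`, and
no integer matrix `G` with `det G = 1` satisfies `G * F = F⁻¹ * G`. -/
theorem stmt8 (n : ℕ) (hn : 2 ≤ n) (hne : Even n) :
    ∃ F : Matrix (Fin n) (Fin n) ℤ,
      F.det = 1 ∧
      (F - 1).det = 1 ∧
      (¬ ∃ G : Matrix (Fin n) (Fin n) ℤ, G.det = -1 ∧ F * G = G * F) ∧
      (¬ ∃ G : Matrix (Fin n) (Fin n) ℤ, G.det = 1 ∧ G * F = F⁻¹ * G) := by 
  rcases Nat.lt_or_ge 2 n with h | h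
  · exact big_case n h hne
  · obtain rfl : n = 2 := le_antisymm h hn
    exact two_case
end

section
/- In the polynomial ring ℤ[X₀, X₁, X₂], let q₁ = X₁X₂, q₂ = 2·X₀X₂ and q₃ = 3·X₀X₁. Let M be a 3×3 integer matrix with det M = ±1, and let σ_M denote the ℤ-algebra substitution sending each variable X_i to the linear form Σ_j M_{ij}·X_j. Suppose there exists a 3×3 integer matrix N such that σ_M(q_i) = Σ_j N_{ij}·q_j for i = 1, 2, 3. Then M is a diagonal matrix with each diagonal entry equal to 1 or −1. -/
open MvPolynomial

lemma col_aux {a b c : ℤ} (h1 : b * c = 0) (h2 : a * c = 0) (h3 : a * b = 0) :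
    (b = 0 ∧ c = 0) ∨ (a = 0 ∧ c = 0) ∨ (a = 0 ∧ b = 0) := by
  simp only [mul_eq_zero] at h1 h2 h3
  tauto

lemma unit_aux {a b c : ℤ} (h : a * b * c = 1 ∨ a * b * c = -1) :
    (a = 1 ∨ a = -1) ∧ (b = 1 ∨ b = -1) ∧ (c = 1 ∨ c = -1) := by
  have h' : IsUnit (a * b * c) := Int.isUnit_iff.2 h
  simp only [IsUnit.mul_iff, Int.isUnit_iff] at h'
  tauto

lemma core_aux (a0 a1 a2 b0 b1 b2 c0 c1 c2 n1 n2 n3 n4 : ℤ)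
    (hd : a0 * b1 * c2 - a0 * b2 * c1 - a1 * b0 * c2 + a1 * b2 * c0 + a2 * b0 * c1
      - a2 * b1 * c0 = 1 ∨ a0 * b1 * c2 - a0 * b2 * c1 - a1 * b0 * c2 + a1 * b2 * c0
      + a2 * b0 * c1 - a2 * b1 * c0 = -1)
    (h0 : (b0 = 0 ∧ c0 = 0) ∨ (a0 = 0 ∧ c0 = 0) ∨ (a0 = 0 ∧ b0 = 0))
    (h1 : (b1 = 0 ∧ c1 = 0) ∨ (a1 = 0 ∧ c1 = 0) ∨ (a1 = 0 ∧ b1 = 0))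
    (h2 : (b2 = 0 ∧ c2 = 0) ∨ (a2 = 0 ∧ c2 = 0) ∨ (a2 = 0 ∧ b2 = 0))
    (e1 : b0 * c1 + b1 * c0 = 3 * n1) (e2 : b0 * c2 + b2 * c0 = 2 * n2)
    (e3 : 2 * (a0 * c1 + a1 * c0) = 3 * n3) (e4 : 3 * (a0 * b2 + a2 * b0) = 2 * n4) :
    (a1 = 0 ∧ a2 = 0 ∧ b0 = 0 ∧ b2 = 0 ∧ c0 = 0 ∧ c1 = 0) ∧
    (a0 = 1 ∨ a0 = -1) ∧ (b1 = 1 ∨ b1 = -1) ∧ (c2 = 1 ∨ c2 = -1) := by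
  rcases h0 with ⟨rfl, rfl⟩ | ⟨rfl, rfl⟩ | ⟨rfl, rfl⟩ <;>
  rcases h1 with ⟨rfl, rfl⟩ | ⟨rfl, rfl⟩ | ⟨rfl, rfl⟩ <;>
  rcases h2 with ⟨rfl, rfl⟩ | ⟨rfl, rfl⟩ | ⟨rfl, rfl⟩ <;>
  simp only [mul_zero, zero_mul, sub_zero, add_zero, zero_add, zero_sub,
    neg_eq_iff_eq_neg, neg_neg] at hd e1 e2 e3 e4 <;>
  first
  | omega
  | (obtain ⟨ha, hb, hc⟩ := unit_aux hd
     simp [ha, hb, hc]; done)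
  | (exfalso
     obtain ⟨ha, hb, hc⟩ := unit_aux hd.symm
     rcases ha with rfl | rfl <;> rcases hb with rfl | rfl <;> rcases hc with rfl | rfl <;> omega)
  | (exfalso
     obtain ⟨ha, hb, hc⟩ := unit_aux hd
     rcases ha with rfl | rfl <;> rcases hb with rfl | rfl <;> rcases hc with rfl | rfl <;> omega)

/-- Let `q₁ = X₁X₂`, `q₂ = 2X₀X₂`, `q₃ = 3X₀X₁` in `ℤ[X₀, X₁, X₂]`. If `M` is a `3 × 3`
integer matrix with `det M = ±1` and the substitution `Xᵢ ↦ Σⱼ Mᵢⱼ Xⱼ` maps each `qᵢ`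
into the `ℤ`-span of `q₁, q₂, q₃`, then `M` is diagonal with entries `±1`. -/
theorem stmt12 (M : Matrix (Fin 3) (Fin 3) ℤ) (hM : M.det = 1 ∨ M.det = -1)
    (q : Fin 3 → MvPolynomial (Fin 3) ℤ)
    (hq : q = ![X 1 * X 2, 2 * (X 0 * X 2), 3 * (X 0 * X 1)])
    (N : Matrix (Fin 3) (Fin 3) ℤ)
    (hN : ∀ i, (aeval fun i => ∑ j, C (M i j) * X j) (q i) = ∑ j, C (N i j) * q j) :
    (∀ i j, i ≠ j → M i j = 0) ∧ (∀ i, M i i = 1 ∨ M i i = -1) := by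
  subst hq
  have H : ∀ (v : Fin 3 → ℤ) (i : Fin 3), _ := fun v i => congrArg (eval v) (hN i)
  have K0 := fun x y z : ℤ => H ![x, y, z] 0
  have K1 := fun x y z : ℤ => H ![x, y, z] 1
  have K2 := fun x y z : ℤ => H ![x, y, z] 2
  clear H hN
  have t2 : ∀ f : Fin 3 → MvPolynomial (Fin 3) ℤ, bind₁ f 2 = 2 := fun f => map_ofNat (bind₁ f) 2
  have t3 : ∀ f : Fin 3 → MvPolynomial (Fin 3) ℤ, bind₁ f 3 = 3 := fun f => map_ofNat (bind₁ f) 3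
  simp [Fin.sum_univ_three, t2, t3] at K0 K1 K2
  rw [Matrix.det_fin_three] at hM
  have a1 := K0 1 0 0
  have a2 := K0 0 1 0
  have a3 := K0 0 0 1
  have a4 := K0 1 1 0
  have a5 := K0 1 0 1
  have b1 := K1 1 0 0
  have b2 := K1 0 1 0
  have b3 := K1 0 0 1
  have b4 := K1 1 1 0
  have c1 := K2 1 0 0
  have c2 := K2 0 1 0
  have c3 := K2 0 0 1
  have c5 := K2 1 0 1
  clear K0 K1 K2
  have key := core_aux (M 0 0) (M 0 1) (M 0 2) (M 1 0) (M 1 1) (M 1 2) (M 2 0) (M 2 1) (M 2 2)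
    (N 0 2) (N 0 1) (N 1 2) (N 2 1) (by convert hM using 2 <;> ring)
    (col_aux (by linarith) (by linarith) (by linarith))
    (col_aux (by linarith) (by linarith) (by linarith))
    (col_aux (by linarith) (by linarith) (by linarith))
    (by linarith) (by linarith) (by linarith) (by linarith)
  obtain ⟨⟨h1, h2, h3, h4, h5, h6⟩, h7, h8, h9⟩ := key
  constructor
  · intro i j hij
    fin_cases i <;> fin_cases j <;> first | exact absurd rfl hij | assumption
  · intro i
    fin_cases i <;> assumption
end

section
/- Fix natural numbers n ≥ 1, an odd prime p, and an integer c with c^n ≡ −1 (mod p). Define f : (Fin n → ℂ) → (Fin n → ℂ) by (f z)_j = z_{j+1} for j < n−1 and (f z)_{n−1} = conj(z₀), and define A : (Fin n → ℂ) → (Fin n → ℂ) by (A z)_j = exp(2πi·c^(j+1)/p) · z_j. Then: (i) the 2n-fold iterate of f is the identity map; and (ii) f ∘ A = A^[c] ∘ f, where A^[c] denotes the c-fold iterate of A. -/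
open Complex

/-- Let `p` be an odd prime, `n ≥ 1` and `c` with `c^n ≡ -1 (mod p)`. Let
`f : ℂⁿ → ℂⁿ` be `(z₁, …, zₙ) ↦ (z₂, …, zₙ, conj z₁)` and let `A` be the
diagonal action `(A z)ⱼ = exp(2πi·c^(j+1)/p)·zⱼ`. Then `f^[2n] = id` and
`f ∘ A = A^[c] ∘ f`. -/
theorem stmt17 (n : ℕ) (hn : 0 < n) (p : ℕ) (hp : p.Prime) (hodd : Odd p)
    (c : ℕ) (hc : (c : ZMod p) ^ n = -1)
    (f A : (Fin n → ℂ) → (Fin n → ℂ))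
    (hf : ∀ (z : Fin n → ℂ) (j : Fin n), f z j =
      if h : (j : ℕ) + 1 < n then z ⟨(j : ℕ) + 1, h⟩
      else (starRingEnd ℂ) (z ⟨0, hn⟩))
    (hA : ∀ (z : Fin n → ℂ) (j : Fin n), A z j =
      Complex.exp (2 * Real.pi * Complex.I * (c : ℂ) ^ ((j : ℕ) + 1) / p) * z j) :
    f^[2 * n] = id ∧ f ∘ A = A^[c] ∘ f := by
  have h1 : ∀ k : ℕ, ∀ hk : k ≤ n, ∀ (z : Fin n → ℂ) (j : Fin n), f^[k] z j =
      if h : (j : ℕ) + k < n then z ⟨(j : ℕ) + k, h⟩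
      else (starRingEnd ℂ) (z ⟨(j : ℕ) + k - n, by have := j.2; omega⟩) := by
    intro k
    induction k with
    | zero => intro _ z j; simp
    | succ k ih =>
      intro hk z j
      have hj := j.2
      rw [Function.iterate_succ_apply', hf]
      by_cases h : (j : ℕ) + 1 < n
      · rw [dif_pos h, ih (by omega)]
        by_cases h2 : (j : ℕ) + (k + 1) < n
        · rw [dif_pos (show (j : ℕ) + 1 + k < n by omega), dif_pos h2]
          congr 2; simp only []; omega
        · rw [dif_neg (show ¬ (j : ℕ) + 1 + k < n by omega), dif_neg h2]
          congr 3; simp only []; omega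
      · rw [dif_neg h, ih (by omega), dif_pos (show 0 + k < n by omega),
          dif_neg (show ¬ (j : ℕ) + (k + 1) < n by omega)]
        congr 3; simp only []; omega
  have h2 : ∀ (z : Fin n → ℂ) (j : Fin n), f^[n] z j = (starRingEnd ℂ) (z j) := by
    intro z j
    rw [h1 n le_rfl, dif_neg (by omega)]
    congr 3; omega
  have h3 : ∀ (k : ℕ) (z : Fin n → ℂ) (j : Fin n), A^[k] z j =
      Complex.exp (2 * Real.pi * Complex.I * (c : ℂ) ^ ((j : ℕ) + 1) / p) ^ k * z j := by
    intro k
    induction k with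
    | zero => intro z j; simp
    | succ k ih =>
      intro z j
      rw [Function.iterate_succ_apply', hA, ih]; ring
  constructor
  · funext z j
    rw [two_mul, Function.iterate_add_apply, h2, h2]; simp
  · funext z j
    have hj := j.2
    simp only [Function.comp_apply]
    rw [h3, hf, hf, ← Complex.exp_nat_mul]
    by_cases h : (j : ℕ) + 1 < n
    · rw [dif_pos h, dif_pos h, hA]
      congr 2; ring
    · rw [dif_neg h, dif_neg h, hA, map_mul, ← Complex.exp_conj]
      congr 1
      have hjn : (j : ℕ) + 1 = n := by omega
      have hp0 : (p : ℂ) ≠ 0 := by exact_mod_cast hp.ne_zero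
      have hd : p ∣ c ^ (n + 1) + c := by
        rw [← ZMod.natCast_eq_zero_iff]
        push_cast
        rw [pow_succ, hc]; ring
      obtain ⟨m, hm⟩ := hd
      have hm' : (c : ℂ) ^ n * c + c = p * m := by
        rw [← pow_succ]; exact_mod_cast hm
      rw [hjn, eq_comm, Complex.exp_eq_exp_iff_exists_int]
      refine ⟨m, ?_⟩
      have h2c : (starRingEnd ℂ) 2 = 2 := map_ofNat _ 2
      simp [h2c]
      field_simp
      linear_combination hm'
end
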